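/- With C, K₁ as in the measure estimate for L_K, for every K ≥ K₁ and every ν ∈ (0, K₁⁻²), the Lebesgue measure of the set O_K of times t ∈ [T₁,T₂] satisfying (i) K⁻¹ ≤ |u(t)|_{L∞} and max_x u_x(t,x) ≤ K, (ii') K⁻¹ν⁻¹ ≤ −min_x u_x(t,x) ≤ Kν⁻¹, and (iii) |u_xx(t)|_{L∞} ≤ Kν⁻², satisfies λ(O_K) ≥ C. -/

import Mathlib

open MeasureTheory Set
open scoped ENNReal

/-- The `L^p` norm (on the circle, i.e. over one period `(0,1]`) of the `m`-th
derivative of a function `v : ℝ → ℝ` (identified with a function on `S¹ = ℝ/ℤ`). -/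
noncomputable def sobLp (m : ℕ) (p : ℝ≥0∞) (v : ℝ → ℝ) : ℝ :=
  (eLpNorm (iteratedDeriv m v) p (volume.restrict (Ioc (0:ℝ) 1))).toReal

/-- `u` is a smooth, space-periodic, zero-mean-value solution of the generalised
Burgers equation `u_t + f'(u) u_x - ν u_xx = 0` with strongly convex `f` and
nonzero initial condition. -/
structure IsBurgersSolution (f : ℝ → ℝ) (σ ν : ℝ) (u : ℝ → ℝ → ℝ) : Prop where
  hf : ContDiff ℝ (⊤ : ℕ∞) f
  hσ : 0 < σ
  hconv : ∀ y, σ ≤ iteratedDeriv 2 f y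
  hν : 0 < ν
  hu : ContDiffOn ℝ (⊤ : ℕ∞) (Function.uncurry u) (Ici (0:ℝ) ×ˢ univ)
  hper : ∀ t x, u t (x + 1) = u t x
  hpde : ∀ t, 0 < t → ∀ x,
    deriv (fun s => u s x) t + deriv f (u t x) * deriv (u t) x
      - ν * deriv (deriv (u t)) x = 0
  hmean : ∀ t, 0 ≤ t → ∫ x in Ioc (0:ℝ) 1, u t x = 0
  hinit : ∃ x, u 0 x ≠ 0

/-- The quantity `D = max(|u₀|₁⁻¹, |u₀|_{1,∞})`. -/
noncomputable def burgersD (u : ℝ → ℝ → ℝ) : ℝ :=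
  max (sobLp 0 1 (u 0))⁻¹ (sobLp 1 ⊤ (u 0))

/-- `T₁ = D⁻² C̃⁻¹ / 4`. -/
noncomputable def burgersT₁ (D Ct : ℝ) : ℝ := (D ^ 2)⁻¹ * Ct⁻¹ / 4

/-- `T₂ = max(3T₁/2, 2Dσ⁻¹)`. -/
noncomputable def burgersT₂ (σ D Ct : ℝ) : ℝ :=
  max (3 / 2 * burgersT₁ D Ct) (2 * D * σ⁻¹)

/-- Time average over `[T₁, T₂]`. -/
noncomputable def timeAvg (T₁ T₂ : ℝ) (A : ℝ → ℝ) : ℝ :=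
  (T₂ - T₁)⁻¹ * ∫ t in T₁..T₂, A t

/-- The structure function `S_p(ℓ)`. -/
noncomputable def structFun (T₁ T₂ : ℝ) (u : ℝ → ℝ → ℝ) (p ℓ : ℝ) : ℝ :=
  timeAvg T₁ T₂ (fun t => ∫ x in Ioc (0:ℝ) 1, |u t (x + ℓ) - u t x| ^ p)


open Filter Topology

namespace Burg

/-- smooth on positive times -/
def Sm (W : ℝ → ℝ → ℝ) : Prop :=
  ∀ t, 0 < t → ∀ x, ContDiffAt ℝ (⊤ : ℕ∞) (Function.uncurry W) (t, x)

def Per (W : ℝ → ℝ → ℝ) : Prop := ∀ t x, W t (x + 1) = W t x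

noncomputable def dx (W : ℝ → ℝ → ℝ) : ℝ → ℝ → ℝ := fun t x => deriv (W t) x
noncomputable def dt (W : ℝ → ℝ → ℝ) : ℝ → ℝ → ℝ := fun t x => deriv (fun s => W s x) t

lemma hasDerivAt_x_aux {W : ℝ → ℝ → ℝ} (h : Sm W) {t : ℝ} (ht : 0 < t) (x : ℝ) :
    HasDerivAt (W t) (fderiv ℝ (Function.uncurry W) (t, x) (0, 1)) x := by
  have h1 : HasFDerivAt (Function.uncurry W) (fderiv ℝ (Function.uncurry W) (t, x)) (t, x) :=
    ((h t ht x).differentiableAt (by simp)).hasFDerivAt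
  have h2 : HasDerivAt (fun y : ℝ => (t, y)) ((0 : ℝ), (1 : ℝ)) x :=
    (hasDerivAt_const x t).prodMk (hasDerivAt_id x)
  exact h1.comp_hasDerivAt x h2

lemma hasDerivAt_t_aux {W : ℝ → ℝ → ℝ} (h : Sm W) {t : ℝ} (ht : 0 < t) (x : ℝ) :
    HasDerivAt (fun s => W s x) (fderiv ℝ (Function.uncurry W) (t, x) (1, 0)) t := by
  have h1 : HasFDerivAt (Function.uncurry W) (fderiv ℝ (Function.uncurry W) (t, x)) (t, x) :=
    ((h t ht x).differentiableAt (by simp)).hasFDerivAt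
  have h2 : HasDerivAt (fun y : ℝ => (y, x)) ((1 : ℝ), (0 : ℝ)) t :=
    (hasDerivAt_id t).prodMk (hasDerivAt_const t x)
  exact h1.comp_hasDerivAt t h2

lemma dx_eq {W : ℝ → ℝ → ℝ} (h : Sm W) {t : ℝ} (ht : 0 < t) (x : ℝ) :
    dx W t x = fderiv ℝ (Function.uncurry W) (t, x) (0, 1) := (hasDerivAt_x_aux h ht x).deriv

lemma dt_eq {W : ℝ → ℝ → ℝ} (h : Sm W) {t : ℝ} (ht : 0 < t) (x : ℝ) :
    dt W t x = fderiv ℝ (Function.uncurry W) (t, x) (1, 0) := (hasDerivAt_t_aux h ht x).deriv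

lemma hasDx {W : ℝ → ℝ → ℝ} (h : Sm W) {t : ℝ} (ht : 0 < t) (x : ℝ) :
    HasDerivAt (W t) (dx W t x) x := by rw [dx_eq h ht]; exact hasDerivAt_x_aux h ht x

lemma hasDt {W : ℝ → ℝ → ℝ} (h : Sm W) {t : ℝ} (ht : 0 < t) (x : ℝ) :
    HasDerivAt (fun s => W s x) (dt W t x) t := by rw [dt_eq h ht]; exact hasDerivAt_t_aux h ht x

lemma ev_pos {t : ℝ} (ht : 0 < t) (x : ℝ) : ∀ᶠ p : ℝ × ℝ in 𝓝 (t, x), 0 < p.1 :=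
  (continuous_fst.tendsto (t, x)).eventually (lt_mem_nhds ht)

lemma fd_smooth {W : ℝ → ℝ → ℝ} (h : Sm W) {t : ℝ} (ht : 0 < t) (x : ℝ) :
    ContDiffAt ℝ (⊤ : ℕ∞) (fderiv ℝ (Function.uncurry W)) (t, x) :=
  (h t ht x).fderiv_right (by simp)

lemma Sm.dx {W : ℝ → ℝ → ℝ} (h : Sm W) : Sm (dx W) := by
  intro t ht x
  have h1 : ContDiffAt ℝ (⊤ : ℕ∞) (fun p => fderiv ℝ (Function.uncurry W) p (0, 1)) (t, x) :=
    (fd_smooth h ht x).clm_apply contDiffAt_const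
  refine h1.congr_of_eventuallyEq ?_
  filter_upwards [ev_pos ht x] with p hp
  exact dx_eq h hp p.2

lemma Sm.dt {W : ℝ → ℝ → ℝ} (h : Sm W) : Sm (dt W) := by
  intro t ht x
  have h1 : ContDiffAt ℝ (⊤ : ℕ∞) (fun p => fderiv ℝ (Function.uncurry W) p (1, 0)) (t, x) :=
    (fd_smooth h ht x).clm_apply contDiffAt_const
  refine h1.congr_of_eventuallyEq ?_
  filter_upwards [ev_pos ht x] with p hp
  exact dt_eq h hp p.2

lemma dt_dx {W : ℝ → ℝ → ℝ} (h : Sm W) {t : ℝ} (ht : 0 < t) (x : ℝ) :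
    dt (dx W) t x = dx (dt W) t x := by
  have hsym : IsSymmSndFDerivAt ℝ (Function.uncurry W) (t, x) :=
    (h t ht x).isSymmSndFDerivAt (by simpa using (WithTop.coe_le_coe.2 (le_top : (2:ℕ∞) ≤ ⊤)))
  have hd : HasFDerivAt (fderiv ℝ (Function.uncurry W))
      (fderiv ℝ (fderiv ℝ (Function.uncurry W)) (t, x)) (t, x) :=
    ((fd_smooth h ht x).differentiableAt (by simp)).hasFDerivAt
  have key : ∀ v : ℝ × ℝ, HasFDerivAt (fun p => fderiv ℝ (Function.uncurry W) p v)
      ((fderiv ℝ (fderiv ℝ (Function.uncurry W)) (t, x)).flip v) (t, x) := by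
    intro v
    have := hd.clm_apply (hasFDerivAt_const v (t, x))
    simpa using this
  have e1 : dt (dx W) t x = fderiv ℝ (fderiv ℝ (Function.uncurry W)) (t, x) (1, 0) (0, 1) := by
    rw [dt_eq h.dx ht]
    have : fderiv ℝ (Function.uncurry (dx W)) (t, x)
        = fderiv ℝ (fun p => fderiv ℝ (Function.uncurry W) p (0, 1)) (t, x) := by
      apply Filter.EventuallyEq.fderiv_eq
      filter_upwards [ev_pos ht x] with p hp
      exact dx_eq h hp p.2
    rw [this, (key (0, 1)).fderiv]; rfl
  have e2 : dx (dt W) t x = fderiv ℝ (fderiv ℝ (Function.uncurry W)) (t, x) (0, 1) (1, 0) := by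
    rw [dx_eq h.dt ht]
    have : fderiv ℝ (Function.uncurry (dt W)) (t, x)
        = fderiv ℝ (fun p => fderiv ℝ (Function.uncurry W) p (1, 0)) (t, x) := by
      apply Filter.EventuallyEq.fderiv_eq
      filter_upwards [ev_pos ht x] with p hp
      exact dt_eq h hp p.2
    rw [this, (key (1, 0)).fderiv]; rfl
  rw [e1, e2]; exact hsym _ _

lemma Sm.mul {V W : ℝ → ℝ → ℝ} (hV : Sm V) (hW : Sm W) : Sm (fun t x => V t x * W t x) :=
  fun t ht x => (hV t ht x).mul (hW t ht x)

lemma Sm.cont_x {W : ℝ → ℝ → ℝ} (h : Sm W) {t : ℝ} (ht : 0 < t) : Continuous (W t) :=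
  continuous_iff_continuousAt.2 fun x => (hasDx h ht x).continuousAt

lemma Sm.contOn {W : ℝ → ℝ → ℝ} (h : Sm W) :
    ContinuousOn (Function.uncurry W) (Ioi (0:ℝ) ×ˢ univ) :=
  fun p hp => (h p.1 hp.1 p.2).continuousAt.continuousWithinAt

lemma Per.dx {W : ℝ → ℝ → ℝ} (h : Per W) : Per (dx W) := by
  intro t x
  have : W t = fun y => W t (y + 1) := by ext y; exact (h t y).symm
  show deriv (W t) (x + 1) = deriv (W t) x
  conv_rhs => rw [this]
  rw [deriv_comp_add_const]

lemma Per.dt {W : ℝ → ℝ → ℝ} (h : Per W) : Per (dt W) := by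
  intro t x
  show deriv (fun s => W s (x + 1)) t = _
  have : (fun s => W s (x + 1)) = fun s => W s x := by ext s; exact h s x
  rw [this]; rfl

lemma intDt {W : ℝ → ℝ → ℝ} (h : Sm W) {t : ℝ} (ht : 0 < t) :
    HasDerivAt (fun s => ∫ x in (0:ℝ)..1, W s x) (∫ x in (0:ℝ)..1, dt W t x) t := by
  have hc : IsCompact (Icc (t/2) (2*t) ×ˢ Icc (0:ℝ) 1) := isCompact_Icc.prod isCompact_Icc
  obtain ⟨M, hM⟩ := hc.exists_bound_of_continuousOn
    (h.dt.contOn.mono (fun p hp => ⟨by have := hp.1.1; simp only [mem_Ioi]; linarith, trivial⟩))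
  have hs : Ioo (t/2) (2*t) ∈ 𝓝 t := Ioo_mem_nhds (by linarith) (by linarith)
  refine (intervalIntegral.hasDerivAt_integral_of_dominated_loc_of_deriv_le
    (bound := fun _ => M) hs ?_ ?_ ?_ ?_ ?_ ?_).2
  · filter_upwards [lt_mem_nhds ht] with s hs'
    exact (h.cont_x hs').aestronglyMeasurable
  · exact (h.cont_x ht).intervalIntegrable _ _
  · exact (h.dt.cont_x ht).aestronglyMeasurable
  · refine Eventually.of_forall fun x hx s hs' => ?_
    rw [uIoc_of_le zero_le_one] at hx
    exact hM (s, x) ⟨⟨hs'.1.le, hs'.2.le⟩, hx.1.le, hx.2⟩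
  · exact intervalIntegrable_const
  · refine Eventually.of_forall fun x hx s hs' => ?_
    exact hasDt h (by have := hs'.1; linarith) x

lemma intCont {W : ℝ → ℝ → ℝ} (h : Sm W) :
    ContinuousOn (fun s => ∫ x in (0:ℝ)..1, W s x) (Ioi 0) :=
  fun _ ht => (intDt h ht).continuousAt.continuousWithinAt

lemma dt_mul {V W : ℝ → ℝ → ℝ} (hV : Sm V) (hW : Sm W) {t : ℝ} (ht : 0 < t) (x : ℝ) :
    dt (fun t x => V t x * W t x) t x = dt V t x * W t x + V t x * dt W t x :=
  ((hasDt hV ht x).mul (hasDt hW ht x)).deriv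

lemma int_deriv_per {φ φ' : ℝ → ℝ} (h : ∀ x, HasDerivAt φ (φ' x) x) (hc : Continuous φ')
    (hp : φ 1 = φ 0) : ∫ x in (0:ℝ)..1, φ' x = 0 := by
  rw [intervalIntegral.integral_eq_sub_of_hasDerivAt (fun x _ => h x) (hc.intervalIntegrable _ _),
    hp, sub_self]

/-- derivative of the squared norm of `dx V`. -/
lemma energy_dx {V : ℝ → ℝ → ℝ} (h : Sm V) (hp : Per V) {t : ℝ} (ht : 0 < t) :
    HasDerivAt (fun s => ∫ x in (0:ℝ)..1, dx V s x * dx V s x)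
      (∫ x in (0:ℝ)..1, -2 * (dx (dx V) t x * dt V t x)) t := by
  have h1 := intDt (h.dx.mul h.dx) ht
  convert h1 using 1
  rw [← sub_eq_zero, ← intervalIntegral.integral_sub]
  · have hp1 : ∀ W, Per W → W t 1 = W t 0 := fun W hW => by have := hW t 0; simpa using this
    apply int_deriv_per (φ := fun x => -2 * (dx V t x * dt V t x))
    · intro x
      have := ((hasDx h.dx ht x).mul (hasDx h.dt ht x)).const_mul (-2)
      have e : -2 * (dx (dx V) t x * dt V t x) - dt (fun t x => dx V t x * dx V t x) t x
          = -2 * (dx (dx V) t x * dt V t x + dx V t x * dx (dt V) t x) := by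
        rw [dt_mul h.dx h.dx ht, dt_dx h ht]; ring
      rw [e]; exact this
    · exact (continuous_const.mul ((h.dx.dx.cont_x ht).mul (h.dt.cont_x ht))).sub
        ((h.dx.mul h.dx).dt.cont_x ht)
    · simp only [hp1 _ hp.dx, hp1 _ hp.dt]
  · exact (continuous_const.mul ((h.dx.dx.cont_x ht).mul (h.dt.cont_x ht))).intervalIntegrable _ _
  · exact ((h.dx.mul h.dx).dt.cont_x ht).intervalIntegrable _ _

end Burg

namespace Burg

lemma left_max_deriv {g : ℝ → ℝ} {d δ t : ℝ} (h : HasDerivAt g d t) (hδ : δ < t)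
    (hm : ∀ s ∈ Icc δ t, g s ≤ g t) : 0 ≤ d := by
  have h1 : Tendsto (slope g t) (𝓝[<] t) (𝓝 d) :=
    (hasDerivAt_iff_tendsto_slope.1 h).mono_left (nhdsWithin_mono _ (fun s hs => ne_of_lt hs))
  refine ge_of_tendsto h1 ?_
  filter_upwards [Ioo_mem_nhdsLT hδ] with s hs
  rw [slope_def_field]
  exact div_nonneg_of_nonpos (by linarith [hm s ⟨hs.1.le, hs.2.le⟩]) (by linarith [hs.2])

lemma second_deriv_max {g : ℝ → ℝ} {x : ℝ} (hg : ContinuousAt g x) (hm : IsLocalMax g x) :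
    deriv (deriv g) x ≤ 0 := by
  by_contra hlt
  push Not at hlt
  have hmin : IsLocalMin g x := isLocalMin_of_deriv_deriv_pos hlt hm.deriv_eq_zero hg
  have hc : g =ᶠ[𝓝 x] fun _ => g x := by
    filter_upwards [hm, hmin] with y h1 h2 using le_antisymm h1 h2
  have h2 : deriv g =ᶠ[𝓝 x] deriv (fun _ => g x) := hc.deriv
  have h3 := h2.deriv_eq
  simp at h3
  linarith

lemma iter2 (f : ℝ → ℝ) : iteratedDeriv 2 f = deriv (deriv f) := by
  rw [iteratedDeriv_succ, iteratedDeriv_one]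

variable {f : ℝ → ℝ} {σ ν : ℝ} {u : ℝ → ℝ → ℝ}

lemma sol_sm (hs : IsBurgersSolution f σ ν u) : Sm u := by
  intro t ht x
  refine (hs.hu (t, x) ⟨ht.le, trivial⟩).contDiffAt ?_
  exact prod_mem_nhds (Ici_mem_nhds ht) univ_mem

lemma sol_pde (hs : IsBurgersSolution f σ ν u) {t : ℝ} (ht : 0 < t) (x : ℝ) :
    dt u t x = ν * dx (dx u) t x - deriv f (u t x) * dx u t x := by
  have := hs.hpde t ht x
  show deriv (fun s => u s x) t = ν * deriv (deriv (u t)) x - deriv f (u t x) * deriv (u t) x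
  linarith

lemma f_d1 (hf : ContDiff ℝ (⊤ : ℕ∞) f) (y : ℝ) : HasDerivAt f (deriv f y) y :=
  (hf.differentiable (by simp) y).hasDerivAt

lemma f_d2s (hf : ContDiff ℝ (⊤ : ℕ∞) f) : ContDiff ℝ (⊤ : ℕ∞) (deriv f) :=
  hf.deriv' 

lemma sol_pde2 (hs : IsBurgersSolution f σ ν u) {t : ℝ} (ht : 0 < t) (x : ℝ) :
    dt (dx u) t x = ν * dx (dx (dx u)) t x - deriv (deriv f) (u t x) * dx u t x ^ 2
      - deriv f (u t x) * dx (dx u) t x := by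
  have h := sol_sm hs
  rw [dt_dx h ht]
  have e : dt u t = fun y => ν * dx (dx u) t y - deriv f (u t y) * dx u t y := by
    ext y; exact sol_pde hs ht y
  show deriv (dt u t) x = _
  rw [e]
  have h1 : HasDerivAt (fun y => deriv f (u t y)) (deriv (deriv f) (u t x) * dx u t x) x :=
    (f_d1 (f_d2s hs.hf) (u t x)).comp x (hasDx h ht x)
  have := ((hasDx h.dx.dx ht x).const_mul ν).sub (h1.mul (hasDx h.dx ht x))
  refine (this.deriv).trans ?_
  ring

lemma per_exists {v : ℝ → ℝ} (h : ∀ x, v (x + 1) = v x) (a x : ℝ) :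
    ∃ y ∈ Icc a (a + 1), v y = v x := by
  have hp : Function.Periodic v 1 := h
  obtain ⟨y, hy, e⟩ := hp.exists_mem_Ico one_pos x a
  exact ⟨y, ⟨hy.1, hy.2.le⟩, e.symm⟩

lemma oleinik_aux (hs : IsBurgersSolution f σ ν u) {δ T : ℝ} (hδ : 0 < δ) (hT : δ < T) (x : ℝ) :
    σ * ((T - δ) * dx u T x) ≤ 1 := by
  have h := sol_sm hs
  have hper : Per u := hs.hper
  have hc : IsCompact (Icc δ T ×ˢ Icc (0:ℝ) 1) := isCompact_Icc.prod isCompact_Icc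
  obtain ⟨⟨t0, x0⟩, hmem, hmax⟩ := hc.exists_isMaxOn
    ⟨(δ, 0), ⟨left_mem_Icc.2 hT.le, left_mem_Icc.2 zero_le_one⟩⟩
    (f := fun p : ℝ × ℝ => (p.1 - δ) * Function.uncurry (dx u) p)
    (((continuous_fst.sub continuous_const).continuousOn).mul
      (h.dx.contOn.mono (fun p hp => ⟨lt_of_lt_of_le hδ hp.1.1, trivial⟩)))
  have hall : ∀ s ∈ Icc δ T, ∀ y, (s - δ) * dx u s y ≤ (t0 - δ) * dx u t0 x0 := by
    intro s hs' y
    obtain ⟨z, hz, e⟩ := per_exists (hper.dx s) 0 y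
    rw [← e]
    exact hmax (show (s, z) ∈ _ from ⟨hs', by simpa using hz⟩)
  have ht0 : t0 ∈ Icc δ T := hmem.1
  have htp : 0 < t0 := lt_of_lt_of_le hδ ht0.1
  by_contra hlt
  push Not at hlt
  have hσ := hs.hσ
  have hbig : 1 < σ * ((t0 - δ) * dx u t0 x0) :=
    lt_of_lt_of_le hlt (mul_le_mul_of_nonneg_left (hall T ⟨hT.le, le_rfl⟩ x) hσ.le)
  have hlt0 : δ < t0 := by
    rcases ht0.1.eq_or_lt with e | e
    · rw [← e] at hbig; simp at hbig; linarith
    · exact e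
  have hpos : 0 < t0 - δ := by linarith
  have hux : 0 < dx u t0 x0 := by
    by_contra hn
    push Not at hn
    have : (t0 - δ) * dx u t0 x0 ≤ 0 := mul_nonpos_of_nonneg_of_nonpos hpos.le hn
    nlinarith
  have hlm : IsLocalMax (dx u t0) x0 :=
    Eventually.of_forall fun y => le_of_mul_le_mul_left (hall t0 ht0 y) hpos
  have h1 : dx (dx u) t0 x0 = 0 := hlm.deriv_eq_zero
  have h2 : dx (dx (dx u)) t0 x0 ≤ 0 := second_deriv_max (hasDx h.dx htp x0).continuousAt hlm
  have h3 : HasDerivAt (fun s => (s - δ) * dx u s x0)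
      (1 * dx u t0 x0 + (t0 - δ) * dt (dx u) t0 x0) t0 :=
    ((hasDerivAt_id t0).sub_const δ).mul (hasDt h.dx htp x0)
  have h4 := left_max_deriv h3 hlt0 (fun s hs' => hall s ⟨hs'.1, hs'.2.trans ht0.2⟩ x0)
  rw [sol_pde2 hs htp, h1] at h4
  have hcv := hs.hconv (u t0 x0)
  rw [iter2] at hcv
  have h5 : (t0 - δ) * (ν * dx (dx (dx u)) t0 x0) ≤ 0 :=
    mul_nonpos_of_nonneg_of_nonpos hpos.le (mul_nonpos_of_nonneg_of_nonpos hs.hν.le h2)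
  have h6 : (t0 - δ) * (σ * dx u t0 x0 ^ 2) ≤ (t0 - δ) * (deriv (deriv f) (u t0 x0) * dx u t0 x0 ^ 2) := by
    gcongr
  have h7 : dx u t0 x0 * 1 < dx u t0 x0 * (σ * ((t0 - δ) * dx u t0 x0)) :=
    mul_lt_mul_of_pos_left hbig hux
  nlinarith

lemma oleinik (hs : IsBurgersSolution f σ ν u) {t : ℝ} (ht : 0 < t) (x : ℝ) :
    dx u t x ≤ (σ * t)⁻¹ := by
  have hσ := hs.hσ
  have h1 : Tendsto (fun δ : ℝ => σ * ((t - δ) * dx u t x)) (𝓝[>] 0) (𝓝 (σ * ((t - 0) * dx u t x))) := by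
    apply Tendsto.mono_left _ nhdsWithin_le_nhds
    exact Continuous.tendsto (by fun_prop) 0
  have h2 : σ * ((t - 0) * dx u t x) ≤ 1 := by
    refine le_of_tendsto h1 ?_
    filter_upwards [Ioo_mem_nhdsGT ht] with δ hδ using oleinik_aux hs hδ.1 hδ.2 x
  rw [inv_eq_one_div, le_div_iff₀ (by positivity)]
  linarith
  
end Burg

namespace Burg

lemma exists_zero {v : ℝ → ℝ} (hc : Continuous v) (h0 : ∫ x in (0:ℝ)..1, v x = 0) :
    ∃ z, v z = 0 := by
  have hd : ∀ x, HasDerivAt (fun y => ∫ s in (0:ℝ)..y, v s) (v x) x := fun x =>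
    intervalIntegral.integral_hasDerivAt_right (hc.intervalIntegrable _ _)
      (hc.stronglyMeasurableAtFilter _ _) hc.continuousAt
  obtain ⟨c, -, hc'⟩ := exists_hasDerivAt_eq_zero (zero_lt_one' ℝ)
    (fun x _ => (hd x).continuousAt.continuousWithinAt) (by simp [h0]) (fun x _ => hd x)
  exact ⟨c, hc'⟩

lemma sup_le_of_deriv_le {v v' : ℝ → ℝ} (hd : ∀ x, HasDerivAt v (v' x) x)
    (hp : ∀ x, v (x + 1) = v x) (h0 : ∫ x in (0:ℝ)..1, v x = 0) {B : ℝ} (hB : 0 ≤ B)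
    (hv : ∀ x, v' x ≤ B) (x : ℝ) : |v x| ≤ B := by
  have hc : Continuous v := continuous_iff_continuousAt.2 fun x => (hd x).continuousAt
  obtain ⟨z, hz⟩ := exists_zero hc h0
  have hdiff : Differentiable ℝ v := fun x => (hd x).differentiableAt
  have hinc : ∀ a b, a ≤ b → v b - v a ≤ B * (b - a) := fun a b hab =>
    image_sub_le_mul_sub_of_deriv_le hdiff (fun x => by rw [(hd x).deriv]; exact hv x) hab
  obtain ⟨y1, hy1, e1⟩ := per_exists hp (x - 1) z
  obtain ⟨y2, hy2, e2⟩ := per_exists hp x z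
  have i1 := hinc y1 x (by linarith [hy1.2])
  have i2 := hinc x y2 hy2.1
  rw [e1, hz] at i1
  rw [e2, hz] at i2
  have j1 : B * (x - y1) ≤ B * 1 := mul_le_mul_of_nonneg_left (by linarith [hy1.1]) hB
  have j2 : B * (y2 - x) ≤ B * 1 := mul_le_mul_of_nonneg_left (by linarith [hy2.2]) hB
  rw [abs_le]
  constructor <;> linarith

lemma agmon {w w' : ℝ → ℝ} (hd : ∀ x, HasDerivAt w (w' x) x) (hc' : Continuous w')
    (hp : ∀ x, w (x + 1) = w x) (hp' : ∀ x, w' (x + 1) = w' x)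
    (h0 : ∫ x in (0:ℝ)..1, w x = 0) {ν : ℝ} (hν : 0 < ν) (x : ℝ) :
    w x ^ 2 ≤ (∫ x in (0:ℝ)..1, w x * w x) / ν + ν * ∫ x in (0:ℝ)..1, w' x * w' x := by
  have hc : Continuous w := continuous_iff_continuousAt.2 fun x => (hd x).continuousAt
  obtain ⟨z0, hz0⟩ := exists_zero hc h0
  obtain ⟨z, hz, e⟩ := per_exists hp x z0
  have hftc : ∫ y in x..z, 2 * (w y * w' y) = w z ^ 2 - w x ^ 2 := by
    refine intervalIntegral.integral_eq_sub_of_hasDerivAt (f := fun y => w y ^ 2) (fun y _ => ?_)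
      (Continuous.intervalIntegrable (by fun_prop) _ _)
    have := (hd y).pow 2
    have e : 2 * (w y * w' y) = ((2:ℕ):ℝ) * w y ^ (2 - 1) * w' y := by push_cast; ring
    rw [e]; exact this
  have hg : Continuous (fun y => w y * w y / ν + ν * (w' y * w' y)) := by fun_prop
  have hnn : ∀ y, 0 ≤ w y * w y / ν + ν * (w' y * w' y) := fun y => by
    have := mul_self_nonneg (w y); have := mul_self_nonneg (w' y); positivity
  have h1 : -∫ y in x..z, 2 * (w y * w' y) ≤ ∫ y in x..z, (w y * w y / ν + ν * (w' y * w' y)) := by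
    rw [← intervalIntegral.integral_neg]
    refine intervalIntegral.integral_mono_on hz.1
      (Continuous.intervalIntegrable (by fun_prop) _ _) (hg.intervalIntegrable _ _) (fun y _ => ?_)
    have h2 : w y * w y / ν + ν * (w' y * w' y) + 2 * (w y * w' y) = (w y + ν * w' y) ^ 2 / ν := by
      field_simp; ring
    have h3 : 0 ≤ (w y + ν * w' y) ^ 2 / ν := by positivity
    linarith
  have h2 : ∫ y in x..z, (w y * w y / ν + ν * (w' y * w' y))
      ≤ ∫ y in x..(x+1), (w y * w y / ν + ν * (w' y * w' y)) := by
    refine intervalIntegral.integral_mono_interval le_rfl hz.1 hz.2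
      (Eventually.of_forall hnn) (hg.intervalIntegrable _ _)
  have hper : Function.Periodic (fun y => w y * w y / ν + ν * (w' y * w' y)) 1 := fun y => by
    simp only [hp, hp']
  have h3 := hper.intervalIntegral_add_eq x 0
  rw [zero_add] at h3
  have h4 : ∫ y in (0:ℝ)..1, (w y * w y / ν + ν * (w' y * w' y)) =
      (∫ x in (0:ℝ)..1, w x * w x) / ν + ν * ∫ x in (0:ℝ)..1, w' x * w' x := by
    rw [intervalIntegral.integral_add (Continuous.intervalIntegrable (by fun_prop) _ _)
    (Continuous.intervalIntegrable (by fun_prop) _ _), intervalIntegral.integral_div,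
    intervalIntegral.integral_const_mul]
  rw [hftc, e, hz0] at h1
  linarith

noncomputable def nP (V : ℝ → ℝ → ℝ) (t : ℝ) : ℝ := ∫ x in (0:ℝ)..1, V t x * V t x

lemma nP_nonneg (V : ℝ → ℝ → ℝ) (t : ℝ) : 0 ≤ nP V t :=
  intervalIntegral.integral_nonneg zero_le_one fun _ _ => mul_self_nonneg _

lemma nP_cont {V : ℝ → ℝ → ℝ} (h : Sm V) : ContinuousOn (nP V) (Ioi 0) := intCont (h.mul h)

variable {f : ℝ → ℝ} {σ ν : ℝ} {u : ℝ → ℝ → ℝ}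

lemma int_dx_zero {V : ℝ → ℝ → ℝ} (h : Sm V) (hp : Per V) {t : ℝ} (ht : 0 < t) :
    ∫ x in (0:ℝ)..1, dx V t x = 0 :=
  int_deriv_per (fun x => hasDx h ht x) (h.dx.cont_x ht) (by have := hp t 0; simpa using this)

lemma mean_zero (hs : IsBurgersSolution f σ ν u) {t : ℝ} (ht : 0 < t) :
    ∫ x in (0:ℝ)..1, u t x = 0 := by
  rw [intervalIntegral.integral_of_le zero_le_one]; exact hs.hmean t ht.le

lemma u_sup (hs : IsBurgersSolution f σ ν u) {t : ℝ} (ht : 0 < t) (x : ℝ) :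
    |u t x| ≤ (σ * t)⁻¹ :=
  sup_le_of_deriv_le (fun x => hasDx (sol_sm hs) ht x) (hs.hper t) (mean_zero hs ht)
    (by have := hs.hσ; positivity) (oleinik hs ht) x

lemma energy0 (hs : IsBurgersSolution f σ ν u) {t : ℝ} (ht : 0 < t) :
    HasDerivAt (nP u) (-2 * ν * nP (dx u) t) t := by
  have h := sol_sm hs
  have hper : Per u := hs.hper
  have h1 := intDt (h.mul h) ht
  have hp1 : ∀ W, Per W → W t 1 = W t 0 := fun W hW => by have := hW t 0; simpa using this
  have hfc : Continuous (fun y => y * deriv f y) := continuous_id.mul (f_d2s hs.hf).continuous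
  have hH : ∀ y, HasDerivAt (fun y => ∫ s in (0:ℝ)..y, s * deriv f s) (y * deriv f y) y := fun y =>
    intervalIntegral.integral_hasDerivAt_right (hfc.intervalIntegrable _ _)
      (hfc.stronglyMeasurableAtFilter _ _) hfc.continuousAt
  have c1 := (h.mul h).dt.cont_x ht
  have c2 := (h.dx.mul h.dx).cont_x ht
  have key : ∫ x in (0:ℝ)..1, (dt (fun t x => u t x * u t x) t x + 2 * ν * (dx u t x * dx u t x)) = 0 := by
    refine int_deriv_per (φ := fun x => 2 * ν * (u t x * dx u t x)
      - 2 * (∫ s in (0:ℝ)..(u t x), s * deriv f s)) (fun x => ?_) ?_ ?_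
    · have e : dt (fun t x => u t x * u t x) t x + 2 * ν * (dx u t x * dx u t x)
        = 2 * ν * (dx u t x * dx u t x + u t x * dx (dx u) t x)
          - 2 * (u t x * deriv f (u t x) * dx u t x) := by
        rw [dt_mul h h ht, sol_pde hs ht]; ring
      rw [e]
      exact (((hasDx h ht x).mul (hasDx h.dx ht x)).const_mul (2 * ν)).sub
        (((hH (u t x)).comp x (hasDx h ht x)).const_mul 2)
    · exact c1.add (continuous_const.mul c2)
    · simp only [hp1 _ hper, hp1 _ hper.dx]
  rw [intervalIntegral.integral_add (c1.intervalIntegrable _ _)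
    (Continuous.intervalIntegrable (by fun_prop) _ _), intervalIntegral.integral_const_mul] at key
  have e : -2 * ν * nP (dx u) t = ∫ x in (0:ℝ)..1, dt (fun t x => u t x * u t x) t x := by
    unfold nP; linarith
  rw [e]; exact h1

/-- differential inequality for `P`. -/
lemma energy1 (hs : IsBurgersSolution f σ ν u) {t F : ℝ} (ht : 0 < t)
    (hF : ∀ x, |deriv f (u t x)| ≤ F) :
    ∃ d, HasDerivAt (nP (dx u)) d t ∧ d ≤ -ν * nP (dx (dx u)) t + F ^ 2 / ν * nP (dx u) t := by
  have h := sol_sm hs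
  have hν := hs.hν
  refine ⟨_, energy_dx h hs.hper ht, ?_⟩
  unfold nP
  have c0 := h.dt.cont_x ht
  have c1 := h.dx.cont_x ht
  have c2 := h.dx.dx.cont_x ht
  rw [← intervalIntegral.integral_const_mul, ← intervalIntegral.integral_const_mul,
    ← intervalIntegral.integral_add (Continuous.intervalIntegrable (by fun_prop) _ _)
    (Continuous.intervalIntegrable (by fun_prop) _ _)]
  refine intervalIntegral.integral_mono_on zero_le_one
    (Continuous.intervalIntegrable (by fun_prop) _ _)
    (Continuous.intervalIntegrable (by fun_prop) _ _) (fun x _ => ?_)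
  rw [sol_pde hs ht]
  have hg := sq_le_sq' (abs_le.1 (hF x)).1 (abs_le.1 (hF x)).2
  generalize deriv f (u t x) = g at *
  generalize dx u t x = p at *
  generalize dx (dx u) t x = q at *
  have h1 : g ^ 2 / ν * (p * p) ≤ F ^ 2 / ν * (p * p) := by
    have := mul_self_nonneg p
    gcongr
  have h2 : -ν * (q * q) + g ^ 2 / ν * (p * p) - -2 * (q * (ν * q - g * p)) = (ν * q - g * p) ^ 2 / ν := by
    field_simp; ring
  have h3 : 0 ≤ (ν * q - g * p) ^ 2 / ν := by positivity
  linarith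

/-- differential inequality for `Q`. -/
lemma energy2 (hs : IsBurgersSolution f σ ν u) {t F G A : ℝ} (ht : 0 < t)
    (hF : ∀ x, |deriv f (u t x)| ≤ F) (hG : ∀ x, |deriv (deriv f) (u t x)| ≤ G)
    (hA : ∀ x, dx u t x ^ 2 ≤ A) :
    ∃ d, HasDerivAt (nP (dx (dx u))) d t ∧
      d ≤ -ν * nP (dx (dx (dx u))) t + 2 / ν * (F ^ 2 * nP (dx (dx u)) t + G ^ 2 * A * nP (dx u) t) := by
  have h := sol_sm hs
  have hper : Per u := hs.hper
  have hν := hs.hν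
  refine ⟨_, energy_dx h.dx hper.dx ht, ?_⟩
  unfold nP
  have c0 := h.dx.dt.cont_x ht
  have c1 := h.dx.cont_x ht
  have c2 := h.dx.dx.cont_x ht
  have c3 := h.dx.dx.dx.cont_x ht
  rw [← intervalIntegral.integral_const_mul, ← intervalIntegral.integral_const_mul,
    ← intervalIntegral.integral_const_mul,
    ← intervalIntegral.integral_add (Continuous.intervalIntegrable (by fun_prop) _ _)
    (Continuous.intervalIntegrable (by fun_prop) _ _), ← intervalIntegral.integral_const_mul,
    ← intervalIntegral.integral_add (Continuous.intervalIntegrable (by fun_prop) _ _)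
    (Continuous.intervalIntegrable (by fun_prop) _ _)]
  refine intervalIntegral.integral_mono_on zero_le_one
    (Continuous.intervalIntegrable (by fun_prop) _ _)
    (Continuous.intervalIntegrable (by fun_prop) _ _) (fun x _ => ?_)
  rw [sol_pde2 hs ht]
  have hg := sq_le_sq' (abs_le.1 (hF x)).1 (abs_le.1 (hF x)).2
  have hk := sq_le_sq' (abs_le.1 (hG x)).1 (abs_le.1 (hG x)).2
  have hA' := hA x
  generalize deriv f (u t x) = g at *
  generalize deriv (deriv f) (u t x) = k at *
  generalize dx u t x = p at *
  generalize dx (dx u) t x = q at *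
  generalize dx (dx (dx u)) t x = r at *
  have a1 : g ^ 2 * (q * q) ≤ F ^ 2 * (q * q) := mul_le_mul_of_nonneg_right hg (mul_self_nonneg q)
  have a2 : k ^ 2 * p ^ 2 * (p * p) ≤ G ^ 2 * A * (p * p) := by
    have := mul_self_nonneg p
    gcongr
  have a3 : 2 / ν * (g ^ 2 * (q * q) + k ^ 2 * p ^ 2 * (p * p)) ≤
      2 / ν * (F ^ 2 * (q * q) + G ^ 2 * A * (p * p)) := by
    gcongr
  have h2 : -ν * (r * r) + 2 / ν * (g ^ 2 * (q * q) + k ^ 2 * p ^ 2 * (p * p))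
      - -2 * (r * (ν * r - k * p ^ 2 - g * q))
      = ((ν * r - k * p ^ 2 - g * q) ^ 2 + (k * p ^ 2 - g * q) ^ 2) / ν := by
    field_simp; ring
  have h3 : 0 ≤ ((ν * r - k * p ^ 2 - g * q) ^ 2 + (k * p ^ 2 - g * q) ^ 2) / ν := by positivity
  linarith

end Burg

namespace Burg

variable {f : ℝ → ℝ} {σ ν : ℝ} {u : ℝ → ℝ → ℝ}

lemma nP_ii {V : ℝ → ℝ → ℝ} (h : Sm V) {a b : ℝ} (ha : 0 < a) (hab : a ≤ b) :
    IntervalIntegrable (nP V) volume a b :=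
  ((nP_cont h).mono (fun _ ht => lt_of_lt_of_le ha ht.1)).intervalIntegrable_of_Icc hab

lemma ux_sup (hs : IsBurgersSolution f σ ν u) {t : ℝ} (ht : 0 < t) (x : ℝ) :
    dx u t x ^ 2 ≤ nP (dx u) t / ν + ν * nP (dx (dx u)) t := by
  have h := sol_sm hs
  have hper : Per u := hs.hper
  exact agmon (fun x => hasDx h.dx ht x) (h.dx.dx.cont_x ht) (hper.dx t) (hper.dx.dx t)
    (int_dx_zero h hper ht) hs.hν x

lemma uxx_sup (hs : IsBurgersSolution f σ ν u) {t : ℝ} (ht : 0 < t) (x : ℝ) :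
    dx (dx u) t x ^ 2 ≤ nP (dx (dx u)) t / ν + ν * nP (dx (dx (dx u))) t := by
  have h := sol_sm hs
  have hper : Per u := hs.hper
  exact agmon (fun x => hasDx h.dx.dx ht x) (h.dx.dx.dx.cont_x ht) (hper.dx.dx t) (hper.dx.dx.dx t)
    (int_dx_zero h.dx hper.dx ht) hs.hν x

lemma sub_le_int {g φ : ℝ → ℝ} {a b : ℝ} (hab : a ≤ b) (hg : ∀ t ∈ Icc a b, ∃ d, HasDerivAt g d t ∧ d ≤ φ t)
    (hφ : ContinuousOn φ (Icc a b)) : g b - g a ≤ ∫ t in a..b, φ t := by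
  have hd : ∀ t ∈ Icc a b, HasDerivAt g (deriv g t) t ∧ deriv g t ≤ φ t := by
    intro t ht
    obtain ⟨d, h1, h2⟩ := hg t ht
    rw [h1.deriv]; exact ⟨h1, h2⟩
  exact intervalIntegral.sub_le_integral_of_hasDeriv_right_of_le hab
    (fun t ht => (hd t ht).1.continuousAt.continuousWithinAt)
    (fun t ht => (hd t (Ioo_subset_Icc_self ht)).1.hasDerivWithinAt)
    (hφ.integrableOn_Icc (μ := volume)) (fun t ht => (hd t (Ioo_subset_Icc_self ht)).2)

lemma Qint (hs : IsBurgersSolution f σ ν u) {a b F Ct : ℝ} (ha : 0 < a) (hab : a ≤ b)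
    (hF : ∀ t ∈ Icc a b, ∀ x, |deriv f (u t x)| ≤ F)
    (hP : ∀ t ∈ Icc a b, nP (dx u) t ≤ Ct / ν) :
    ν * ∫ t in a..b, nP (dx (dx u)) t ≤ Ct / ν + F ^ 2 / ν * (Ct / ν) * (b - a) := by
  have h := sol_sm hs
  have hν := hs.hν
  have hQ := nP_ii h.dx.dx ha hab
  have hQc : ContinuousOn (nP (dx (dx u))) (Icc a b) :=
    (nP_cont h.dx.dx).mono (fun t ht => lt_of_lt_of_le ha ht.1)
  have := sub_le_int (g := nP (dx u)) (φ := fun t => -ν * nP (dx (dx u)) t + F ^ 2 / ν * (Ct / ν)) hab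
    (fun t ht => by
      obtain ⟨d, h1, h2⟩ := energy1 hs (lt_of_lt_of_le ha ht.1) (hF t ht)
      refine ⟨d, h1, h2.trans ?_⟩
      have := hP t ht
      gcongr) ((continuousOn_const.mul hQc).add continuousOn_const)
  rw [intervalIntegral.integral_add (hQ.const_mul _) intervalIntegrable_const,
    intervalIntegral.integral_const_mul, intervalIntegral.integral_const, smul_eq_mul] at this
  have h1 := hP a ⟨le_rfl, hab⟩
  have h2 := nP_nonneg (dx u) b
  linarith

lemma Rint (hs : IsBurgersSolution f σ ν u) {a b F G Ct : ℝ} (ha : 0 < a) (hab : a ≤ b)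
    (hF : ∀ t ∈ Icc a b, ∀ x, |deriv f (u t x)| ≤ F)
    (hG : ∀ t ∈ Icc a b, ∀ x, |deriv (deriv f) (u t x)| ≤ G)
    (hP : ∀ t ∈ Icc a b, nP (dx u) t ≤ Ct / ν) :
    ν * ∫ t in a..b, nP (dx (dx (dx u))) t ≤ nP (dx (dx u)) a +
      2 / ν * ((F ^ 2 + G ^ 2 * Ct) * (∫ t in a..b, nP (dx (dx u)) t) + G ^ 2 * Ct ^ 2 / ν ^ 3 * (b - a)) := by
  have h := sol_sm hs
  have hν := hs.hν
  have hQ := nP_ii h.dx.dx ha hab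
  have hR := nP_ii h.dx.dx.dx ha hab
  have hQc : ContinuousOn (nP (dx (dx u))) (Icc a b) :=
    (nP_cont h.dx.dx).mono (fun t ht => lt_of_lt_of_le ha ht.1)
  have hRc : ContinuousOn (nP (dx (dx (dx u)))) (Icc a b) :=
    (nP_cont h.dx.dx.dx).mono (fun t ht => lt_of_lt_of_le ha ht.1)
  have := sub_le_int (g := nP (dx (dx u)))
    (φ := fun t => -ν * nP (dx (dx (dx u))) t +
      (2 / ν * (F ^ 2 + G ^ 2 * Ct) * nP (dx (dx u)) t + 2 / ν * (G ^ 2 * Ct ^ 2 / ν ^ 3))) hab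
    (fun t ht => by
      have ht0 := lt_of_lt_of_le ha ht.1
      have hPt := hP t ht
      have hQ0 := nP_nonneg (dx (dx u)) t
      obtain ⟨d, h1, h2⟩ := energy2 hs ht0 (hF t ht) (hG t ht)
        (A := Ct / ν / ν + ν * nP (dx (dx u)) t)
        (fun x => (ux_sup hs ht0 x).trans (by gcongr))
      refine ⟨d, h1, h2.trans ?_⟩
      have hCt : 0 ≤ Ct / ν := (nP_nonneg (dx u) t).trans hPt
      have e : -ν * nP (dx (dx (dx u))) t +
        (2 / ν * (F ^ 2 + G ^ 2 * Ct) * nP (dx (dx u)) t + 2 / ν * (G ^ 2 * Ct ^ 2 / ν ^ 3))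
        = -ν * nP (dx (dx (dx u))) t + 2 / ν * (F ^ 2 * nP (dx (dx u)) t +
          G ^ 2 * (Ct / ν / ν + ν * nP (dx (dx u)) t) * (Ct / ν)) := by
        field_simp; ring
      rw [e]
      gcongr) 
    ((continuousOn_const.mul hRc).add ((continuousOn_const.mul hQc).add continuousOn_const))
  rw [intervalIntegral.integral_add (hR.const_mul _) ((hQ.const_mul _).add intervalIntegrable_const),
    intervalIntegral.integral_add (hQ.const_mul _) intervalIntegrable_const,
    intervalIntegral.integral_const_mul, intervalIntegral.integral_const_mul,
    intervalIntegral.integral_const, smul_eq_mul] at this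
  have h2 := nP_nonneg (dx (dx u)) b
  linarith

lemma exists_le_avg {g : ℝ → ℝ} {a b : ℝ} (hab : a < b) (hg : ContinuousOn g (Icc a b)) :
    ∃ t ∈ Icc a b, (b - a) * g t ≤ ∫ t in a..b, g t := by
  obtain ⟨t, ht, hmin⟩ := isCompact_Icc.exists_isMinOn (nonempty_Icc.2 hab.le) hg
  refine ⟨t, ht, ?_⟩
  have := intervalIntegral.integral_mono_on hab.le (intervalIntegrable_const (μ := volume) (c := g t))
    (hg.intervalIntegrable_of_Icc hab.le) (fun s hs => hmin hs)
  simpa using this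

lemma chebyshev {g : ℝ → ℝ} {a b M η T : ℝ} (hab : a ≤ b) (hg : ContinuousOn g (Icc a b))
    (hM : 0 < M) (hT : 0 < T) (hη : 0 < η) (hgM : ∀ t ∈ Icc a b, g t ≤ M) (hbT : b - a ≤ T)
    (hint : η ≤ ∫ t in a..b, g t) :
    ENNReal.ofReal (η / (2 * M)) ≤ volume {t | t ∈ Icc a b ∧ η / (2 * T) ≤ g t} := by
  set A := {t | t ∈ Icc a b ∧ η / (2 * T) ≤ g t} with hA
  have hAm : MeasurableSet A := by
    have : IsClosed A := by
      have := hg.preimage_isClosed_of_isClosed isClosed_Icc (isClosed_Ici (a := η / (2 * T)))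
      exact this
    exact this.measurableSet
  have hAs : A ⊆ Icc a b := fun t ht => ht.1
  have hAf : volume A ≠ ⊤ := ne_top_of_le_ne_top (by simp) (measure_mono hAs)
  have hI1 : IntegrableOn (fun _ : ℝ => η / (2 * T)) (Icc a b) := integrableOn_const (by simp)
  have hI2 : IntegrableOn (A.indicator (fun _ : ℝ => M)) (Icc a b) :=
    (integrableOn_const (by simp)).indicator hAm
  have h1 : ∫ t in Icc a b, g t ≤ ∫ t in Icc a b, (η / (2 * T) + A.indicator (fun _ => M) t) := by
    refine setIntegral_mono_on hg.integrableOn_Icc (hI1.add hI2) measurableSet_Icc (fun t ht => ?_)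
    by_cases hta : t ∈ A
    · rw [indicator_of_mem hta]
      have := hgM t ht
      have : 0 < η / (2 * T) := by positivity
      linarith
    · rw [indicator_of_notMem hta]
      have : g t < η / (2 * T) := by
        by_contra hn; exact hta ⟨ht, not_lt.1 hn⟩
      linarith
  rw [integral_add hI1 hI2, setIntegral_indicator hAm, inter_eq_self_of_subset_right hAs,
    setIntegral_const, setIntegral_const, smul_eq_mul, smul_eq_mul, Real.volume_real_Icc_of_le hab,
    integral_Icc_eq_integral_Ioc, ← intervalIntegral.integral_of_le hab] at h1
  have h2 : (b - a) * (η / (2 * T)) ≤ T * (η / (2 * T)) := by gcongr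
  have h3 : T * (η / (2 * T)) = η / 2 := by field_simp
  have h4 : η / (2 * M) ≤ volume.real A := by
    rw [div_le_iff₀ (by positivity)]; linarith
  exact ENNReal.ofReal_le_of_le_toReal h4

end Burg

namespace Burg

lemma sob2 {v : ℝ → ℝ} {k : ℕ} {w : ℝ → ℝ} (hw : iteratedDeriv k v = w) (hc : Continuous w) :
    sobLp k 2 v ^ 2 = ∫ x in (0:ℝ)..1, w x * w x := by
  have hm : MemLp w 2 (volume.restrict (Ioc (0:ℝ) 1)) := by
    obtain ⟨M, hM⟩ := isCompact_Icc.exists_bound_of_continuousOn (s := Icc (0:ℝ) 1) hc.continuousOn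
    refine MemLp.of_bound hc.aestronglyMeasurable M ?_
    filter_upwards [ae_restrict_mem measurableSet_Ioc] with y hy using hM y ⟨hy.1.le, hy.2⟩
  unfold sobLp
  rw [hw, hm.eLpNorm_eq_integral_rpow_norm (by simp) (by simp),
    intervalIntegral.integral_of_le zero_le_one]
  have e : ∫ x in Ioc (0:ℝ) 1, ‖w x‖ ^ (2:ℝ≥0∞).toReal = ∫ x in Ioc (0:ℝ) 1, w x * w x := by
    congr 1; ext x
    simp [pow_two]
  have hnn : 0 ≤ ∫ x in Ioc (0:ℝ) 1, w x * w x := integral_nonneg fun x => mul_self_nonneg _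
  rw [e, ENNReal.toReal_ofReal (by positivity)]
  rw [← Real.rpow_natCast, ← Real.rpow_mul hnn]
  simp

lemma sob1 {v : ℝ → ℝ} (hc : Continuous v) :
    sobLp 0 1 v = ∫ x in (0:ℝ)..1, |v x| := by
  unfold sobLp
  rw [iteratedDeriv_zero, eLpNorm_one_eq_lintegral_enorm, intervalIntegral.integral_of_le zero_le_one]
  rw [← integral_norm_eq_lintegral_enorm hc.aestronglyMeasurable]
  rfl

lemma sob_top_le {v : ℝ → ℝ} {k : ℕ} {M : ℝ} (hM : 0 ≤ M) (h : ∀ x, |iteratedDeriv k v x| ≤ M) :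
    sobLp k ⊤ v ≤ M := by
  unfold sobLp
  refine ENNReal.toReal_le_of_le_ofReal hM ?_
  rw [eLpNorm_exponent_top]
  exact eLpNormEssSup_le_of_ae_bound (Eventually.of_forall h)

lemma le_sob_top {v : ℝ → ℝ} {k : ℕ} (hc : Continuous (iteratedDeriv k v))
    {x : ℝ} (hx : x ∈ Icc (0:ℝ) 1) : |iteratedDeriv k v x| ≤ sobLp k ⊤ v := by
  set w := iteratedDeriv k v with hw
  obtain ⟨M, hM⟩ := isCompact_Icc.exists_bound_of_continuousOn (s := Icc (0:ℝ) 1) hc.continuousOn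
  have hfin : eLpNormEssSup w (volume.restrict (Ioc (0:ℝ) 1)) ≠ ⊤ := by
    refine ne_top_of_le_ne_top ENNReal.ofReal_ne_top
      (eLpNormEssSup_le_of_ae_bound (C := M) ?_)
    filter_upwards [ae_restrict_mem measurableSet_Ioc] with y hy using hM y ⟨hy.1.le, hy.2⟩
  have hae : ∀ᵐ y ∂(volume.restrict (Ioc (0:ℝ) 1)), |w y| ≤ sobLp k ⊤ v := by
    filter_upwards [ae_le_eLpNormEssSup (f := w) (μ := volume.restrict (Ioc (0:ℝ) 1))] with y hy
    unfold sobLp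
    rw [← hw, eLpNorm_exponent_top]
    have := ENNReal.toReal_mono hfin hy
    simpa using this
  have hIoo : ∀ y ∈ Ioo (0:ℝ) 1, |w y| ≤ sobLp k ⊤ v := by
    by_contra hn
    push Not at hn
    obtain ⟨y, hy, hlt⟩ := hn
    have hopen : IsOpen ({z | sobLp k ⊤ v < |w z|} ∩ Ioo (0:ℝ) 1) :=
      (isOpen_lt continuous_const hc.abs).inter isOpen_Ioo
    have hpos := hopen.measure_pos volume ⟨y, hlt, hy⟩
    rw [ae_iff, Measure.restrict_apply' measurableSet_Ioc] at hae
    refine hpos.ne' (measure_mono_null ?_ hae)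
    rintro z ⟨h1, h2⟩
    exact ⟨not_le.2 h1, h2.1, h2.2.le⟩
  have hcl : closure (Ioo (0:ℝ) 1) ⊆ {y | |w y| ≤ sobLp k ⊤ v} :=
    closure_minimal hIoo (isClosed_le hc.abs continuous_const)
  rw [closure_Ioo zero_ne_one] at hcl
  exact hcl hx

lemma int_abs_sq {v : ℝ → ℝ} (hc : Continuous v) :
    (∫ x in (0:ℝ)..1, |v x|) ^ 2 ≤ ∫ x in (0:ℝ)..1, v x * v x := by
  set m := ∫ x in (0:ℝ)..1, |v x| with hm
  have h1 : 0 ≤ ∫ x in (0:ℝ)..1, (v x * v x - (2 * m * |v x| - m ^ 2)) := by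
    refine intervalIntegral.integral_nonneg zero_le_one fun x _ => ?_
    nlinarith [sq_nonneg (|v x| - m), abs_mul_abs_self (v x)]
  rw [intervalIntegral.integral_sub (Continuous.intervalIntegrable (by fun_prop) _ _)
    (Continuous.intervalIntegrable (by fun_prop) _ _),
    intervalIntegral.integral_sub (Continuous.intervalIntegrable (by fun_prop) _ _)
    (Continuous.intervalIntegrable (by fun_prop) _ _), intervalIntegral.integral_const_mul, ← hm,
    intervalIntegral.integral_const, smul_eq_mul] at h1
  nlinarith

variable {f : ℝ → ℝ} {σ ν : ℝ} {u : ℝ → ℝ → ℝ}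

lemma sol_cont0 (hs : IsBurgersSolution f σ ν u) :
    Continuous (fun p : ℝ × ℝ => u (max p.1 0) p.2) := by
  have h1 : Continuous (fun p : ℝ × ℝ => (max p.1 0, p.2)) := by fun_prop
  exact hs.hu.continuousOn.comp_continuous h1 (fun p => ⟨mem_Ici.2 (le_max_right _ _), trivial⟩)

lemma u0_cont (hs : IsBurgersSolution f σ ν u) : Continuous (u 0) := by
  have : Continuous (fun x : ℝ => u (max (0:ℝ) 0) x) :=
    (sol_cont0 hs).comp (Continuous.prodMk_right (0:ℝ))
  simpa using this

lemma E_cont (hs : IsBurgersSolution f σ ν u) : ContinuousOn (nP u) (Ici 0) := by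
  have h1 : Continuous (fun t => ∫ x in (0:ℝ)..1, u (max t 0) x * u (max t 0) x) := by
    apply intervalIntegral.continuous_parametric_intervalIntegral_of_continuous'
    exact (sol_cont0 hs).mul (sol_cont0 hs)
  refine h1.continuousOn.congr fun t ht => ?_
  simp only [nP, max_eq_left (mem_Ici.1 ht)]

lemma D_facts (hs : IsBurgersSolution f σ ν u) {D : ℝ} (hD : burgersD u = D) :
    0 < D ∧ (D ^ 2)⁻¹ ≤ nP u 0 := by
  have hc := u0_cont hs
  have h1 : (sobLp 0 1 (u 0))⁻¹ ≤ D := by rw [← hD]; exact le_max_left _ _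
  rw [sob1 hc] at h1
  set m := ∫ x in (0:ℝ)..1, |u 0 x| with hm
  have hpos : 0 < m := by
    obtain ⟨x, hx⟩ := hs.hinit
    obtain ⟨y, hy, e⟩ := per_exists (hs.hper 0) 0 x
    refine intervalIntegral.integral_pos zero_lt_one hc.abs.continuousOn (fun _ _ => abs_nonneg _) 
      ⟨y, by simpa using hy, ?_⟩
    rw [e]; exact abs_pos.2 hx
  have hDp : 0 < D := lt_of_lt_of_le (inv_pos.2 hpos) h1
  refine ⟨hDp, ?_⟩
  have h2 : D⁻¹ ≤ m := by rw [inv_le_comm₀ hDp hpos]; exact h1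
  calc (D ^ 2)⁻¹ = D⁻¹ ^ 2 := by rw [inv_pow]
    _ ≤ m ^ 2 := by gcongr
    _ ≤ _ := int_abs_sq hc

end Burg

namespace Burg

variable {f : ℝ → ℝ} {σ ν : ℝ} {u : ℝ → ℝ → ℝ}

lemma QR_bounds (hs : IsBurgersSolution f σ ν u) (hν1 : ν ≤ 1) {Ct T1 T2 F G : ℝ} (hCt : 0 < Ct)
    (hT1 : 0 < T1) (hT12 : T1 ≤ T2)
    (hF : ∀ y, |y| ≤ (σ * (T1 / 2))⁻¹ → |deriv f y| ≤ F)
    (hG : ∀ y, |y| ≤ (σ * (T1 / 2))⁻¹ → |deriv (deriv f) y| ≤ G)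
    (hP : ∀ t, 0 < t → nP (dx u) t ≤ Ct / ν) :
    ν ^ 3 * (∫ t in T1..T2, nP (dx (dx u)) t) ≤ Ct + F ^ 2 * Ct * T2 ∧
    ν ^ 5 * (∫ t in T1..T2, nP (dx (dx (dx u))) t) ≤ (Ct + F ^ 2 * Ct * T2) / (T1 / 2)
      + 2 * ((F ^ 2 + G ^ 2 * Ct) * (Ct + F ^ 2 * Ct * T2) + G ^ 2 * Ct ^ 2 * T2) := by
  have h := sol_sm hs
  have hν := hs.hν
  have hσ := hs.hσ
  set a := T1 / 2 with ha
  have ha0 : 0 < a := by positivity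
  have hT2 : 0 < T2 := hT1.trans_le hT12
  have haT : a ≤ T2 := by linarith
  have hu : ∀ t, a ≤ t → ∀ x, |u t x| ≤ (σ * a)⁻¹ := fun t ht x =>
    (u_sup hs (ha0.trans_le ht) x).trans (by gcongr)
  have hmono : ∀ V, Sm V → ∀ s r, a ≤ s → s ≤ r → r ≤ T2 →
      ∫ t in s..r, nP V t ≤ ∫ t in a..T2, nP V t := fun V hV s r h1 h2 h3 =>
    intervalIntegral.integral_mono_interval h1 h2 h3
      (Eventually.of_forall fun t => nP_nonneg V t) (nP_ii hV ha0 haT)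
  have hQ := Qint hs (F := F) ha0 haT (fun t ht x => hF _ (hu t ht.1 x))
    (fun t ht => hP t (ha0.trans_le ht.1))
  set IQ := ∫ t in a..T2, nP (dx (dx u)) t with hIQ
  set M1 := Ct + F ^ 2 * Ct * T2 with hM1
  have hQ3 : ν ^ 3 * IQ ≤ M1 := by
    have h1 : ν ^ 3 * IQ = ν ^ 2 * (ν * IQ) := by ring
    have h2 : ν ^ 2 * (ν * IQ) ≤ ν ^ 2 * (Ct / ν + F ^ 2 / ν * (Ct / ν) * (T2 - a)) := by gcongr
    have h3 : ν ^ 2 * (Ct / ν + F ^ 2 / ν * (Ct / ν) * (T2 - a)) = ν * Ct + F ^ 2 * Ct * (T2 - a) := by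
      field_simp
    have h4 : ν * Ct ≤ 1 * Ct := by gcongr
    have h5 : F ^ 2 * Ct * (T2 - a) ≤ F ^ 2 * Ct * T2 := by gcongr; linarith
    rw [h1, hM1]; linarith
  have hν3 : 0 < ν ^ 3 := by positivity
  refine ⟨le_trans (mul_le_mul_of_nonneg_left (hmono _ h.dx.dx T1 T2 (by linarith) hT12 le_rfl)
    hν3.le) hQ3, ?_⟩
  obtain ⟨t0, ht0, havg⟩ := exists_le_avg (g := nP (dx (dx u))) (a := a) (b := T1) (by linarith)
    ((nP_cont h.dx.dx).mono (fun _ ht => lt_of_lt_of_le ha0 ht.1))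
  have hQ0 : ν ^ 4 * nP (dx (dx u)) t0 ≤ M1 / a := by
    rw [le_div_iff₀ ha0]
    have e1 : T1 - a = a := by rw [ha]; ring
    rw [e1] at havg
    have h1 := havg.trans (hmono _ h.dx.dx a T1 le_rfl (by linarith) hT12)
    have h2 : ν ^ 3 * (a * nP (dx (dx u)) t0) ≤ ν ^ 3 * IQ := by gcongr
    have h3 : 0 ≤ ν ^ 3 * (a * nP (dx (dx u)) t0) := by
      have := nP_nonneg (dx (dx u)) t0
      positivity
    have h4 : ν * (ν ^ 3 * (a * nP (dx (dx u)) t0)) ≤ 1 * (ν ^ 3 * (a * nP (dx (dx u)) t0)) := by gcongr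
    nlinarith
  have ht00 : 0 < t0 := ha0.trans_le ht0.1
  have hR := Rint hs (F := F) (G := G) ht00 (ht0.2.trans hT12)
    (fun t ht x => hF _ (hu t (ht0.1.trans ht.1) x))
    (fun t ht x => hG _ (hu t (ht0.1.trans ht.1) x))
    (fun t ht => hP t (ht00.trans_le ht.1))
  have hRm : ∫ t in T1..T2, nP (dx (dx (dx u))) t ≤ ∫ t in t0..T2, nP (dx (dx (dx u))) t :=
    intervalIntegral.integral_mono_interval ht0.2 hT12 le_rfl
      (Eventually.of_forall fun t => nP_nonneg _ t) (nP_ii h.dx.dx.dx ht00 (ht0.2.trans hT12))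
  have hQm := hmono _ h.dx.dx t0 T2 ht0.1 (ht0.2.trans hT12) le_rfl
  have hR2 : ν * ∫ t in T1..T2, nP (dx (dx (dx u))) t ≤ nP (dx (dx u)) t0 +
      2 / ν * ((F ^ 2 + G ^ 2 * Ct) * IQ + G ^ 2 * Ct ^ 2 / ν ^ 3 * T2) := by
    refine le_trans (mul_le_mul_of_nonneg_left hRm hν.le) (hR.trans ?_)
    gcongr
    linarith
  have h1 : ν ^ 4 * (ν * ∫ t in T1..T2, nP (dx (dx (dx u))) t) ≤ ν ^ 4 * (nP (dx (dx u)) t0 +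
      2 / ν * ((F ^ 2 + G ^ 2 * Ct) * IQ + G ^ 2 * Ct ^ 2 / ν ^ 3 * T2)) := by gcongr
  have h2 : ν ^ 4 * (nP (dx (dx u)) t0 +
      2 / ν * ((F ^ 2 + G ^ 2 * Ct) * IQ + G ^ 2 * Ct ^ 2 / ν ^ 3 * T2))
      = ν ^ 4 * nP (dx (dx u)) t0 + 2 * ((F ^ 2 + G ^ 2 * Ct) * (ν ^ 3 * IQ) + G ^ 2 * Ct ^ 2 * T2) := by
    field_simp
  have h3 : 2 * ((F ^ 2 + G ^ 2 * Ct) * (ν ^ 3 * IQ) + G ^ 2 * Ct ^ 2 * T2)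
      ≤ 2 * ((F ^ 2 + G ^ 2 * Ct) * M1 + G ^ 2 * Ct ^ 2 * T2) := by gcongr
  have h4 : ν ^ 5 * (∫ t in T1..T2, nP (dx (dx (dx u))) t)
      = ν ^ 4 * (ν * ∫ t in T1..T2, nP (dx (dx (dx u))) t) := by ring
  rw [h4]; linarith

/-- energy: a stopping time `s` with dissipation and energy lower bounds -/
lemma energy_window (hs : IsBurgersSolution f σ ν u) {D Ct T1 T2 : ℝ} (hD : burgersD u = D)
    (hCt : 0 < Ct) (hT1 : T1 = (D ^ 2)⁻¹ * Ct⁻¹ / 4) (hT12 : T1 ≤ T2) (hT2 : 2 * D * σ⁻¹ ≤ T2)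
    (hP : ∀ t, 0 < t → nP (dx u) t ≤ Ct / ν) :
    ∃ s ∈ Icc T1 T2, (∀ t ∈ Icc T1 s, 3 / 8 * (D ^ 2)⁻¹ ≤ nP u t) ∧
      (D ^ 2)⁻¹ / 16 ≤ ν * ∫ t in T1..s, nP (dx u) t := by
  have h := sol_sm hs
  have hν := hs.hν
  have hσ := hs.hσ
  obtain ⟨hDp, hE0⟩ := D_facts hs hD
  have hT1p : 0 < T1 := by rw [hT1]; positivity
  have hE1 : (D ^ 2)⁻¹ / 2 ≤ nP u T1 := by
    have := intervalIntegral.sub_le_integral_of_hasDeriv_right_of_le (g := fun t => -nP u t)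
      (g' := fun t => -(-2 * ν * nP (dx u) t)) (φ := fun _ => 2 * Ct) hT1p.le
      ((E_cont hs).neg.mono (fun t ht => ht.1))
      (fun t ht => (energy0 hs ht.1).neg.hasDerivWithinAt)
      (integrableOn_const (by simp)) (fun t ht => by
        have h1 := hP t ht.1
        rw [le_div_iff₀ hν] at h1
        linarith)
    rw [intervalIntegral.integral_const, smul_eq_mul] at this
    have e : (T1 - 0) * (2 * Ct) = (D ^ 2)⁻¹ / 2 := by rw [hT1]; field_simp; norm_num
    linarith
  have hT2p : 0 < T2 := hT1p.trans_le hT12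
  have hE2 : nP u T2 ≤ (D ^ 2)⁻¹ / 4 := by
    have hb : (σ * T2)⁻¹ ≤ (2 * D)⁻¹ := by
      have : 2 * D ≤ σ * T2 := by
        have := mul_le_mul_of_nonneg_left hT2 hσ.le
        have e : σ * (2 * D * σ⁻¹) = 2 * D := by field_simp
        linarith
      gcongr
    have : nP u T2 ≤ ∫ x in (0:ℝ)..1, (2 * D)⁻¹ ^ 2 := by
      refine intervalIntegral.integral_mono_on zero_le_one
        (((h.mul h).cont_x hT2p).intervalIntegrable _ _) intervalIntegrable_const (fun x _ => ?_)
      have h1 := (u_sup hs hT2p x).trans hb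
      have := sq_le_sq' (abs_le.1 h1).1 (abs_le.1 h1).2
      rw [← pow_two]; exact this
    rw [intervalIntegral.integral_const, smul_eq_mul] at this
    have e : (1 - 0) * (2 * D)⁻¹ ^ 2 = (D ^ 2)⁻¹ / 4 := by field_simp; norm_num
    linarith
  have hq : 0 < (D ^ 2)⁻¹ := by positivity
  have hcont : ContinuousOn (nP u) (Icc T1 T2) :=
    (E_cont hs).mono (fun t ht => hT1p.le.trans ht.1)
  obtain ⟨s, hsm, hsE⟩ := intermediate_value_Icc' hT12 hcont
    (show 3 / 8 * (D ^ 2)⁻¹ ∈ Icc (nP u T2) (nP u T1) from ⟨by linarith, by linarith⟩)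
  have hftc : ∀ p q, 0 < p → p ≤ q →
      nP u q - nP u p = -2 * ν * ∫ t in p..q, nP (dx u) t := by
    intro p q hp hpq
    rw [← intervalIntegral.integral_const_mul]
    refine (intervalIntegral.integral_eq_sub_of_hasDerivAt (fun t ht => ?_)
      ((nP_ii h.dx hp hpq).const_mul _)).symm
    rw [uIcc_of_le hpq] at ht
    exact energy0 hs (hp.trans_le ht.1)
  refine ⟨s, hsm, fun t ht => ?_, ?_⟩
  · have h1 := hftc t s (hT1p.trans_le ht.1) ht.2
    have h2 : 0 ≤ ∫ r in t..s, nP (dx u) r :=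
      intervalIntegral.integral_nonneg ht.2 fun r _ => nP_nonneg _ _
    have h3 : 0 ≤ ν * ∫ r in t..s, nP (dx u) r := by positivity
    rw [← hsE]; linarith
  · have h1 := hftc T1 s hT1p hsm.1
    linarith

set_option maxHeartbeats 1600000 in
lemma core (f : ℝ → ℝ) (σ D Ct : ℝ) (hCt : 0 < Ct) (hf : ContDiff ℝ (⊤ : ℕ∞) f) (hσ : 0 < σ)
    (hDp : 0 < D)
    (hCtb : ∀ ν, 0 < ν → ν ≤ 1 →
      ∀ u : ℝ → ℝ → ℝ, IsBurgersSolution f σ ν u → burgersD u = D →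
        ∀ t, 0 ≤ t → sobLp 1 2 (u t) ^ 2 ≤ Ct * ν⁻¹) :
    ∃ C > 0, ∃ K > (1 : ℝ), ∀ ν, 0 < ν → ν ≤ 1 →
        ∀ u : ℝ → ℝ → ℝ, IsBurgersSolution f σ ν u → burgersD u = D →
          ENNReal.ofReal C ≤ volume
            {t : ℝ | 0 < t ∧ t ∈ Icc (burgersT₁ D Ct) (burgersT₂ σ D Ct) ∧
              (K⁻¹ ≤ sobLp 0 ⊤ (u t) ∧ ∀ x, deriv (u t) x ≤ K) ∧
              (K⁻¹ * ν⁻¹ ≤ sobLp 1 ⊤ (u t) ∧ sobLp 1 ⊤ (u t) ≤ K * ν⁻¹) ∧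
              sobLp 2 ⊤ (u t) ≤ K * (ν ^ 2)⁻¹} := by
  set T1 := burgersT₁ D Ct with hT1
  set T2 := burgersT₂ σ D Ct with hT2
  have hT1e : T1 = (D ^ 2)⁻¹ * Ct⁻¹ / 4 := rfl
  have hT1p : 0 < T1 := by rw [hT1e]; positivity
  have hT12 : T1 ≤ T2 := by
    have : 3 / 2 * T1 ≤ T2 := le_max_left _ _
    linarith
  have hT2b : 2 * D * σ⁻¹ ≤ T2 := le_max_right _ _
  have hT2p : 0 < T2 := hT1p.trans_le hT12
  set B := (σ * (T1 / 2))⁻¹ with hB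
  have hBp : 0 < B := by positivity
  obtain ⟨F, hF⟩ := isCompact_Icc.exists_bound_of_continuousOn (s := Icc (-B) B)
    (f_d2s hf).continuous.continuousOn
  obtain ⟨G, hG⟩ := isCompact_Icc.exists_bound_of_continuousOn (s := Icc (-B) B)
    (f_d2s (f_d2s hf)).continuous.continuousOn
  set M1 := Ct + F ^ 2 * Ct * T2 with hM1
  set M2 := M1 / (T1 / 2) + 2 * ((F ^ 2 + G ^ 2 * Ct) * M1 + G ^ 2 * Ct ^ 2 * T2) with hM2
  have hM1p : 0 < M1 := by positivity
  have hM2p : 0 < M2 := by positivity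
  set η := (D ^ 2)⁻¹ / 32 with hη
  have hηp : 0 < η := by positivity
  set ε := η / (M1 + M2) with hε
  have hεp : 0 < ε := by positivity
  set K := 2 + 2 * D + B + 4 * B * T2 / η + Ct + 2 * (Ct / ε) with hK
  have p1 : 0 < 4 * B * T2 / η := by positivity
  have p2 : 0 < Ct / ε := by positivity
  have hK1 : 1 < K := by linarith
  have hKp : 0 < K := by linarith
  have hKsq : K ≤ K ^ 2 := by nlinarith
  refine ⟨η / (2 * Ct), by positivity, K, hK1, ?_⟩
  intro ν hν hν1 u hs hD
  have h := sol_sm hs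
  have hper : Per u := hs.hper
  have i1 : ∀ t, iteratedDeriv 1 (u t) = dx u t := fun t => iteratedDeriv_one
  have i2 : ∀ t, iteratedDeriv 2 (u t) = dx (dx u) t := fun t => iter2 _
  have i0 : ∀ t, iteratedDeriv 0 (u t) = u t := fun t => iteratedDeriv_zero
  have hP : ∀ t, 0 < t → nP (dx u) t ≤ Ct / ν := fun t ht => by
    have := hCtb ν hν hν1 u hs hD t ht.le
    rw [sob2 (i1 t) (h.dx.cont_x ht), ← div_eq_mul_inv] at this
    exact this
  obtain ⟨s, hsm, hsE, hsP⟩ := energy_window hs hD hCt hT1e hT12 hT2b hP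
  obtain ⟨hQ, hR⟩ := QR_bounds hs hν1 hCt hT1p hT12
    (fun y hy => hF y (abs_le.1 hy)) (fun y hy => hG y (abs_le.1 hy)) hP
  rw [← hM1] at hQ
  rw [← hM1, ← hM2] at hR
  have hmono : ∀ V, Sm V → ∫ t in T1..s, nP V t ≤ ∫ t in T1..T2, nP V t := fun V hV =>
    intervalIntegral.integral_mono_interval le_rfl hsm.1 hsm.2
      (Eventually.of_forall fun t => nP_nonneg V t) (nP_ii hV hT1p hT12)
  set P := nP (dx u) with hPdef
  set Q := nP (dx (dx u)) with hQdef
  set R := nP (dx (dx (dx u))) with hRdef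
  have iP := nP_ii h.dx hT1p hsm.1
  have iQ := nP_ii h.dx.dx hT1p hsm.1
  have iR := nP_ii h.dx.dx.dx hT1p hsm.1
  have hP0 : ∀ t, 0 ≤ P t := nP_nonneg _
  have hQ0 : ∀ t, 0 ≤ Q t := nP_nonneg _
  have hR0 : ∀ t, 0 ≤ R t := nP_nonneg _
  have sub : ∀ t ∈ Icc T1 s, t ∈ Ioi (0:ℝ) := fun t ht => hT1p.trans_le ht.1
  have hgc : ContinuousOn (fun t => ν * P t - ε * (ν ^ 3 * Q t) - ε * (ν ^ 5 * R t)) (Icc T1 s) :=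
    ((continuousOn_const.mul ((nP_cont h.dx).mono sub)).sub
      (continuousOn_const.mul (continuousOn_const.mul ((nP_cont h.dx.dx).mono sub)))).sub
      (continuousOn_const.mul (continuousOn_const.mul ((nP_cont h.dx.dx.dx).mono sub)))
  have hνP : ∀ t, 0 < t → ν * P t ≤ Ct := fun t ht => by
    have := hP t ht
    rw [le_div_iff₀ hν] at this
    linarith
  have hint : η ≤ ∫ t in T1..s, (ν * P t - ε * (ν ^ 3 * Q t) - ε * (ν ^ 5 * R t)) := by
    rw [intervalIntegral.integral_sub ((iP.const_mul _).sub ((iQ.const_mul _).const_mul _))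
      ((iR.const_mul _).const_mul _),
      intervalIntegral.integral_sub (iP.const_mul _) ((iQ.const_mul _).const_mul _)]
    simp only [intervalIntegral.integral_const_mul]
    have q1 : ν ^ 3 * (∫ t in T1..s, Q t) ≤ M1 :=
      (mul_le_mul_of_nonneg_left (hmono _ h.dx.dx) (by positivity)).trans hQ
    have q2 : ν ^ 5 * (∫ t in T1..s, R t) ≤ M2 :=
      (mul_le_mul_of_nonneg_left (hmono _ h.dx.dx.dx) (by positivity)).trans hR
    have q3 := mul_le_mul_of_nonneg_left q1 hεp.le
    have q4 := mul_le_mul_of_nonneg_left q2 hεp.le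
    have q5 : ε * M1 + ε * M2 = η := by rw [hε]; field_simp
    have q6 : (D ^ 2)⁻¹ / 16 = 2 * η := by rw [hη]; ring
    linarith
  have hch := chebyshev hsm.1 hgc hCt hT2p hηp (fun t ht => by
    have := hνP t (sub t ht)
    have a1 : 0 ≤ ε * (ν ^ 3 * Q t) := by have := hQ0 t; positivity
    have a2 : 0 ≤ ε * (ν ^ 5 * R t) := by have := hR0 t; positivity
    linarith) (by linarith [hsm.2]) hint
  refine hch.trans (measure_mono ?_)
  rintro t ⟨ht, hgt⟩
  have ht0 : 0 < t := sub t ht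
  have a1 : 0 ≤ ε * (ν ^ 3 * Q t) := by have := hQ0 t; positivity
  have a2 : 0 ≤ ε * (ν ^ 5 * R t) := by have := hR0 t; positivity
  have b0 := hνP t ht0
  have b1 : η / (2 * T2) ≤ ν * P t := by linarith
  have b2 : 0 < η / (2 * T2) := by positivity
  have b3 : ν ^ 3 * Q t ≤ Ct / ε := by rw [le_div_iff₀ hεp]; linarith
  have b4 : ν ^ 5 * R t ≤ Ct / ε := by rw [le_div_iff₀ hεp]; linarith
  have hux : ∀ x, dx u t x ≤ B := fun x =>
    (oleinik hs ht0 x).trans (by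
      have : T1 / 2 ≤ t := by linarith [ht.1]
      rw [hB]; gcongr)
  have c0 : Continuous (u t) := h.cont_x ht0
  have c1 : Continuous (dx u t) := h.dx.cont_x ht0
  have c2 : Continuous (dx (dx u) t) := h.dx.dx.cont_x ht0
  refine ⟨ht0, ⟨ht.1, ht.2.trans hsm.2⟩, ⟨?_, fun x => (hux x).trans (by linarith)⟩, ⟨?_, ?_⟩, ?_⟩
  · -- lower bound for the sup norm
    have hl : ∀ x ∈ Icc (0:ℝ) 1, |u t x| ≤ sobLp 0 ⊤ (u t) := fun x hx => by
      have := le_sob_top (v := u t) (k := 0) (by rw [i0]; exact c0) hx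
      rwa [i0] at this
    set L := sobLp 0 ⊤ (u t)
    have hL0 : 0 ≤ L := (abs_nonneg _).trans (hl 0 ⟨le_rfl, zero_le_one⟩)
    have hEL : nP u t ≤ ∫ x in (0:ℝ)..1, L ^ 2 := by
      refine intervalIntegral.integral_mono_on zero_le_one
        ((c0.mul c0).intervalIntegrable _ _) intervalIntegrable_const (fun x hx => ?_)
      have h1 := hl x hx
      have := sq_le_sq' (abs_le.1 h1).1 (abs_le.1 h1).2
      rw [← pow_two]; exact this
    rw [intervalIntegral.integral_const, smul_eq_mul] at hEL
    have h1 := hsE t ht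
    have h2 : (2 * D)⁻¹ ^ 2 ≤ L ^ 2 := by
      have e : (2 * D)⁻¹ ^ 2 = 1 / 4 * (D ^ 2)⁻¹ := by field_simp; norm_num
      have : 0 < (D ^ 2)⁻¹ := by positivity
      rw [e]; linarith
    have h3 : (2 * D)⁻¹ ≤ L := (sq_le_sq₀ (by positivity) hL0).1 h2
    refine le_trans ?_ h3
    have : 2 * D ≤ K := by linarith
    gcongr
  · have hl : ∀ x ∈ Icc (0:ℝ) 1, |dx u t x| ≤ sobLp 1 ⊤ (u t) := fun x hx => by
      have := le_sob_top (v := u t) (k := 1) (by rw [i1]; exact c1) hx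
      rwa [i1] at this
    set L := sobLp 1 ⊤ (u t)
    have hPL : P t ≤ ∫ x in (0:ℝ)..1, (L * (2 * B) - L * dx u t x) := by
      refine intervalIntegral.integral_mono_on zero_le_one
        ((c1.mul c1).intervalIntegrable _ _) (Continuous.intervalIntegrable (by fun_prop) _ _)
        (fun x hx => ?_)
      have h1 := hl x hx
      have h2 : |dx u t x| ≤ 2 * B - dx u t x := by
        rw [abs_le]; constructor <;> linarith [hux x]
      rw [← abs_mul_abs_self]
      have := mul_le_mul h1 h2 (abs_nonneg _) ((abs_nonneg _).trans h1)
      linarith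
    rw [intervalIntegral.integral_sub intervalIntegrable_const
      (Continuous.intervalIntegrable (by fun_prop) _ _), intervalIntegral.integral_const,
      smul_eq_mul, intervalIntegral.integral_const_mul, int_dx_zero h hper ht0] at hPL
    have h1 : ν * P t ≤ ν * (L * (2 * B)) := mul_le_mul_of_nonneg_left (by linarith) hν.le
    have h2 : (4 * B * T2 / η)⁻¹ * ν⁻¹ ≤ L := by
      have e : (4 * B * T2 / η)⁻¹ * ν⁻¹ = (η / (2 * T2)) / (ν * (2 * B)) := by
        field_simp; norm_num
      rw [e, div_le_iff₀ (by positivity)]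
      linarith
    refine le_trans ?_ h2
    have : 4 * B * T2 / η ≤ K := by linarith
    gcongr
  · refine sob_top_le (by positivity) fun x => ?_
    rw [i1]
    refine abs_le_of_sq_le_sq ?_ (by positivity)
    refine (ux_sup hs ht0 x).trans ?_
    have e : P t / ν + ν * Q t = (ν * P t + ν ^ 3 * Q t) * (ν⁻¹) ^ 2 := by field_simp
    rw [e, mul_pow]
    gcongr
    linarith
  · refine sob_top_le (by positivity) fun x => ?_
    rw [i2]
    refine abs_le_of_sq_le_sq ?_ (by positivity)
    refine (uxx_sup hs ht0 x).trans ?_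
    have e : Q t / ν + ν * R t = (ν ^ 3 * Q t + ν ^ 5 * R t) * ((ν ^ 2)⁻¹) ^ 2 := by field_simp
    rw [e, mul_pow]
    gcongr
    linarith

end Burg

/-- With `C`, `K₁` as in the measure estimate for `L_K`, for
every `K ≥ K₁` and every `ν ∈ (0, K₁⁻²)`, the set `O_K` (where the condition on
`|u_x|_∞` is replaced by the analogous condition on `-min u_x`) has Lebesgue
measure at least `C`. -/
theorem statement16 (f : ℝ → ℝ) (σ D Ct : ℝ) (hCt : 0 < Ct)
    (hCtb : ∀ ν, 0 < ν → ν ≤ 1 →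
      ∀ u : ℝ → ℝ → ℝ, IsBurgersSolution f σ ν u → burgersD u = D →
        ∀ t, 0 ≤ t → sobLp 1 2 (u t) ^ 2 ≤ Ct * ν⁻¹) :
    ∃ C > 0, ∃ K₁ > (1 : ℝ),
      (∀ K, K₁ ≤ K → ∀ ν, 0 < ν → ν ≤ 1 →
        ∀ u : ℝ → ℝ → ℝ, IsBurgersSolution f σ ν u → burgersD u = D →
          ENNReal.ofReal C ≤ volume
            {t : ℝ | t ∈ Icc (burgersT₁ D Ct) (burgersT₂ σ D Ct) ∧
              (K⁻¹ ≤ sobLp 0 ⊤ (u t) ∧ ∀ x, deriv (u t) x ≤ K) ∧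
              (K⁻¹ * ν⁻¹ ≤ sobLp 1 ⊤ (u t) ∧ sobLp 1 ⊤ (u t) ≤ K * ν⁻¹) ∧
              sobLp 2 ⊤ (u t) ≤ K * (ν ^ 2)⁻¹}) ∧
      (∀ K, K₁ ≤ K → ∀ ν, 0 < ν → ν < (K₁ ^ 2)⁻¹ →
        ∀ u : ℝ → ℝ → ℝ, IsBurgersSolution f σ ν u → burgersD u = D →
          ENNReal.ofReal C ≤ volume
            {t : ℝ | t ∈ Icc (burgersT₁ D Ct) (burgersT₂ σ D Ct) ∧
              (K⁻¹ ≤ sobLp 0 ⊤ (u t) ∧ ∀ x, deriv (u t) x ≤ K) ∧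
              (K⁻¹ * ν⁻¹ ≤ -sInf (deriv (u t) '' Icc (0:ℝ) 1) ∧
                -sInf (deriv (u t) '' Icc (0:ℝ) 1) ≤ K * ν⁻¹) ∧
              sobLp 2 ⊤ (u t) ≤ K * (ν ^ 2)⁻¹}) := by
  by_cases hex : ∃ ν u, IsBurgersSolution f σ ν u ∧ burgersD u = D
  swap
  · refine ⟨1, one_pos, 2, by norm_num, ?_, ?_⟩
    · intro K _ ν _ _ u hs hD
      exact absurd ⟨ν, u, hs, hD⟩ hex
    · intro K _ ν _ _ u hs hD
      exact absurd ⟨ν, u, hs, hD⟩ hex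
  obtain ⟨ν0, u0, hs0, hD0⟩ := hex
  obtain ⟨C, hC, K₁, hK₁, hmain⟩ := Burg.core f σ D Ct hCt hs0.hf hs0.hσ
    (Burg.D_facts hs0 hD0).1 hCtb
  have hK₁p : 0 < K₁ := by linarith
  refine ⟨C, hC, K₁, hK₁, ?_, ?_⟩
  · intro K hK ν hν hν1 u hs hD
    refine (hmain ν hν hν1 u hs hD).trans (measure_mono ?_)
    rintro t ⟨_, hT, ⟨h1, h2⟩, ⟨h3, h4⟩, h5⟩
    refine ⟨hT, ⟨le_trans (by gcongr) h1, fun x => (h2 x).trans hK⟩,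
      ⟨le_trans (by gcongr) h3, h4.trans (by gcongr)⟩, h5.trans (by gcongr)⟩
  · intro K hK ν hν hνK u hs hD
    have hν1 : ν ≤ 1 := hνK.le.trans (inv_le_one_of_one_le₀ (by nlinarith))
    refine (hmain ν hν hν1 u hs hD).trans (measure_mono ?_)
    rintro t ⟨ht0, hT, ⟨h1, h2⟩, ⟨h3, h4⟩, h5⟩
    have hc : Continuous (deriv (u t)) := (Burg.sol_sm hs).dx.cont_x ht0
    have hi : iteratedDeriv 1 (u t) = deriv (u t) := iteratedDeriv_one
    have hl : ∀ x ∈ Icc (0:ℝ) 1, |deriv (u t) x| ≤ sobLp 1 ⊤ (u t) := fun x hx => by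
      have := Burg.le_sob_top (v := u t) (k := 1) (by rw [hi]; exact hc) hx
      rwa [hi] at this
    have hbdd : BddBelow (deriv (u t) '' Icc (0:ℝ) 1) := by
      refine ⟨-sobLp 1 ⊤ (u t), ?_⟩
      rintro _ ⟨x, hx, rfl⟩
      exact (abs_le.1 (hl x hx)).1
    have hbig : K₁ < K₁⁻¹ * ν⁻¹ := by
      have h6 : K₁ ^ 2 < ν⁻¹ := (lt_inv_comm₀ hν (by positivity)).1 hνK
      have h7 := mul_lt_mul_of_pos_left h6 (inv_pos.2 hK₁p)
      have e : K₁⁻¹ * K₁ ^ 2 = K₁ := by field_simp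
      linarith
    have hup : -sInf (deriv (u t) '' Icc (0:ℝ) 1) ≤ sobLp 1 ⊤ (u t) := by
      rw [neg_le]
      refine le_csInf ⟨_, 0, ⟨le_rfl, zero_le_one⟩, rfl⟩ ?_
      rintro _ ⟨x, hx, rfl⟩
      exact (abs_le.1 (hl x hx)).1
    have hlow : K₁⁻¹ * ν⁻¹ ≤ -sInf (deriv (u t) '' Icc (0:ℝ) 1) := by
      set m := sInf (deriv (u t) '' Icc (0:ℝ) 1) with hm
      have hmx : ∀ x, m ≤ deriv (u t) x := by
        intro x
        have hper : Burg.Per u := hs.hper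
        obtain ⟨y, hy, e⟩ := Burg.per_exists (hper.dx t) 0 x
        have e' : deriv (u t) y = deriv (u t) x := e
        rw [← e']
        exact csInf_le hbdd ⟨y, by simpa using hy, rfl⟩
      have hle : sobLp 1 ⊤ (u t) ≤ max K₁ (-m) := by
        refine Burg.sob_top_le (hK₁p.le.trans (le_max_left _ _)) fun x => ?_
        rw [hi, abs_le]
        have := le_max_left K₁ (-m)
        have := le_max_right K₁ (-m)
        constructor
        · linarith [hmx x]
        · linarith [h2 x]
      rcases le_max_iff.1 (h3.trans hle) with h6 | h6
      · linarith
      · exact h6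
    refine ⟨hT, ⟨le_trans (by gcongr) h1, fun x => (h2 x).trans hK⟩,
      ⟨le_trans (by gcongr) hlow, hup.trans (h4.trans (by gcongr))⟩, h5.trans (by gcongr)⟩
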